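/- arXiv:0805.2494 — 8 statements merged into one kernel-verified Lean document; each statement's English description precedes it below -/
import Mathlib

section
/- In the rectangle group R, set x = a b⁻¹ and y = a c⁻¹. Then x y = y x = a d⁻¹; in particular x and y commute. -/
/-- The defining relations of the rectangle group `R(n_a, n_b, n_c, n_d)`:
generators `a, b, c, d` (indexed `0, 1, 2, 3`), relations
`a^{n_a} = b^{n_b} = c^{n_c} = d^{n_d} = 1`, `b a⁻¹ = d c⁻¹`, `c a⁻¹ = d b⁻¹`. -/
def rectRels (na nb nc nd : ℕ) : Set (FreeGroup (Fin 4)) :=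
  {FreeGroup.of 0 ^ na, FreeGroup.of 1 ^ nb, FreeGroup.of 2 ^ nc, FreeGroup.of 3 ^ nd,
    FreeGroup.of 1 * (FreeGroup.of 0)⁻¹ * (FreeGroup.of 3 * (FreeGroup.of 2)⁻¹)⁻¹,
    FreeGroup.of 2 * (FreeGroup.of 0)⁻¹ * (FreeGroup.of 3 * (FreeGroup.of 1)⁻¹)⁻¹}

/-- The rectangle group. -/
abbrev RectGroup (na nb nc nd : ℕ) : Type := PresentedGroup (rectRels na nb nc nd)

/-- The generator `a` of the rectangle group. -/
def Ra (na nb nc nd : ℕ) : RectGroup na nb nc nd := PresentedGroup.of 0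
/-- The generator `b` of the rectangle group. -/
def Rb (na nb nc nd : ℕ) : RectGroup na nb nc nd := PresentedGroup.of 1
/-- The generator `c` of the rectangle group. -/
def Rc (na nb nc nd : ℕ) : RectGroup na nb nc nd := PresentedGroup.of 2
/-- The generator `d` of the rectangle group. -/
def Rd (na nb nc nd : ℕ) : RectGroup na nb nc nd := PresentedGroup.of 3

section

variable {G : Type*} [Group G] {a b c d : G}

theorem mul_inv_mul_mul_inv_of_mul_inv_eq_mul_inv (h : c * a⁻¹ = d * b⁻¹) :
    a * b⁻¹ * (a * c⁻¹) = a * d⁻¹ := by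
  have h_inv : a * c⁻¹ = b * d⁻¹ := by simpa using congrArg (·⁻¹) h
  rw [h_inv, mul_inv_mul_mul_cancel]

theorem rect_xy_eq_yx_eq_ad_general (hb : b * a⁻¹ = d * c⁻¹) (hc : c * a⁻¹ = d * b⁻¹) :
    a * b⁻¹ * (a * c⁻¹) = a * d⁻¹ ∧
    a * c⁻¹ * (a * b⁻¹) = a * d⁻¹ ∧
    Commute (a * b⁻¹) (a * c⁻¹) := by
  have xy_eq : a * b⁻¹ * (a * c⁻¹) = a * d⁻¹ := mul_inv_mul_mul_inv_of_mul_inv_eq_mul_inv hc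
  have yx_eq : a * c⁻¹ * (a * b⁻¹) = a * d⁻¹ := mul_inv_mul_mul_inv_of_mul_inv_eq_mul_inv hb
  exact ⟨xy_eq, yx_eq, xy_eq.trans yx_eq.symm⟩

end

theorem Rb_mul_inv_Ra (na nb nc nd : ℕ) :
    Rb na nb nc nd * (Ra na nb nc nd)⁻¹ = Rd na nb nc nd * (Rc na nb nc nd)⁻¹ :=
  PresentedGroup.mk_eq_mk_of_mul_inv_mem (by simp [rectRels])

theorem Rc_mul_inv_Ra (na nb nc nd : ℕ) :
    Rc na nb nc nd * (Ra na nb nc nd)⁻¹ = Rd na nb nc nd * (Rb na nb nc nd)⁻¹ :=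
  PresentedGroup.mk_eq_mk_of_mul_inv_mem (by simp [rectRels])

/-- In the rectangle group `R`, with `x = a b⁻¹` and `y = a c⁻¹`, we have
`x y = y x = a d⁻¹`; in particular `x` and `y` commute. -/
theorem rect_xy_eq_yx_eq_ad (na nb nc nd : ℕ)
    (hna : 2 ≤ na) (hnb : 2 ≤ nb) (hnc : 2 ≤ nc) (hnd : 2 ≤ nd) :
    (Ra na nb nc nd * (Rb na nb nc nd)⁻¹) * (Ra na nb nc nd * (Rc na nb nc nd)⁻¹)
        = Ra na nb nc nd * (Rd na nb nc nd)⁻¹ ∧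
    (Ra na nb nc nd * (Rc na nb nc nd)⁻¹) * (Ra na nb nc nd * (Rb na nb nc nd)⁻¹)
        = Ra na nb nc nd * (Rd na nb nc nd)⁻¹ ∧
    Commute (Ra na nb nc nd * (Rb na nb nc nd)⁻¹) (Ra na nb nc nd * (Rc na nb nc nd)⁻¹) :=
  rect_xy_eq_yx_eq_ad_general (Rb_mul_inv_Ra na nb nc nd) (Rc_mul_inv_Ra na nb nc nd)
end

section
/- In the rectangle group R, the elements b⁻¹ a and c⁻¹ a commute. -/
theorem commute_inv_mul_inv_mul_iff {G : Type*} [Group G] {a b c : G} :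
    Commute (b⁻¹ * a) (c⁻¹ * a) ↔ b * a⁻¹ * c = c * a⁻¹ * b :=
  calc Commute (b⁻¹ * a) (c⁻¹ * a)
    _ ↔ Commute (a⁻¹ * b) (a⁻¹ * c) := by
      rw [← Commute.inv_inv_iff, mul_inv_rev, mul_inv_rev, inv_inv, inv_inv]
    _ ↔ a⁻¹ * (b * a⁻¹ * c) = a⁻¹ * (c * a⁻¹ * b) := by
      simp only [commute_iff_eq, mul_assoc]
    _ ↔ b * a⁻¹ * c = c * a⁻¹ * b := mul_right_inj a⁻¹

theorem rect_commute_binv_a_cinv_a_general {G : Type*} [Group G] {a b c d : G}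
    (hbc : b * a⁻¹ = d * c⁻¹) (hcb : c * a⁻¹ = d * b⁻¹) :
    Commute (b⁻¹ * a) (c⁻¹ * a) :=
  commute_inv_mul_inv_mul_iff.mpr <|
    calc b * a⁻¹ * c
      _ = d := eq_mul_inv_iff_mul_eq.mp hbc
      _ = c * a⁻¹ * b := (eq_mul_inv_iff_mul_eq.mp hcb).symm

namespace RectGroup

variable (na nb nc nd : ℕ)

theorem Rb_mul_Ra_inv :
    Rb na nb nc nd * (Ra na nb nc nd)⁻¹ = Rd na nb nc nd * (Rc na nb nc nd)⁻¹ :=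
  PresentedGroup.mk_eq_mk_of_mul_inv_mem (by simp [rectRels])

theorem Rc_mul_Ra_inv :
    Rc na nb nc nd * (Ra na nb nc nd)⁻¹ = Rd na nb nc nd * (Rb na nb nc nd)⁻¹ :=
  PresentedGroup.mk_eq_mk_of_mul_inv_mem (by simp [rectRels])

end RectGroup

/-- In the rectangle group `R`, the elements `b⁻¹ a` and `c⁻¹ a` commute. -/
theorem rect_commute_binv_a_cinv_a (na nb nc nd : ℕ)
    (hna : 2 ≤ na) (hnb : 2 ≤ nb) (hnc : 2 ≤ nc) (hnd : 2 ≤ nd) :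
    Commute ((Rb na nb nc nd)⁻¹ * Ra na nb nc nd) ((Rc na nb nc nd)⁻¹ * Ra na nb nc nd) :=
  rect_commute_binv_a_cinv_a_general
    (RectGroup.Rb_mul_Ra_inv na nb nc nd) (RectGroup.Rc_mul_Ra_inv na nb nc nd)
end

section
/- The rectangle group R is isomorphic to the amalgamated free product (pushout) G₁ *_C G₂, where G₁ is the presented group ⟨a, b | a^{n_a} = b^{n_b} = 1⟩, G₂ is the presented group ⟨c, d | c^{n_c} = d^{n_d} = 1⟩, C is the free group on two generators s, t, and the amalgamation homomorphisms are determined by s ↦ a b⁻¹, t ↦ b⁻¹ a into G₁ and s ↦ c d⁻¹, t ↦ d⁻¹ c into G₂; the isomorphism carries the images of a, b, c, d in the pushout to the generators a, b, c, d of R. -/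
/-- The relations of the free product of cyclic groups of orders `m` and `n`,
on two generators. -/
def twoCyclicRels (m n : ℕ) : Set (FreeGroup (Fin 2)) :=
  {FreeGroup.of 0 ^ m, FreeGroup.of 1 ^ n}

/-- A two-element family of groups, indexed by `Bool`. -/
def twoFam (G₁ G₂ : Type) : Bool → Type := fun i => match i with
  | true => G₁
  | false => G₂

instance twoFamGroup (G₁ G₂ : Type) [Group G₁] [Group G₂] :
    (i : Bool) → Group (twoFam G₁ G₂ i) := fun i => match i with
  | true => inferInstanceAs (Group G₁)
  | false => inferInstanceAs (Group G₂)

/-- A pair of homomorphisms out of `K`, packaged as a `Bool`-indexed family. -/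
def twoFamHom {K G₁ G₂ : Type} [Group K] [Group G₁] [Group G₂]
    (φ₁ : K →* G₁) (φ₂ : K →* G₂) : (i : Bool) → K →* twoFam G₁ G₂ i := fun i => match i with
  | true => φ₁
  | false => φ₂

/-- The amalgamation map `C → G₁ = ⟨a, b | a^{n_a} = b^{n_b} = 1⟩`,
`s ↦ a b⁻¹`, `t ↦ b⁻¹ a`, where `C` is free on `s, t`. -/
def amalgMap (m n : ℕ) : FreeGroup (Fin 2) →* PresentedGroup (twoCyclicRels m n) :=
  FreeGroup.lift
    ![PresentedGroup.of 0 * (PresentedGroup.of 1)⁻¹,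
      (PresentedGroup.of 1)⁻¹ * PresentedGroup.of 0]

/-!
The relation `b a⁻¹ = d c⁻¹` is equivalent to `a b⁻¹ = c d⁻¹`, and `c a⁻¹ = d b⁻¹` is equivalent to
`b⁻¹ a = d⁻¹ c`; in this form each side involves only one of the pairs `a, b` and `c, d`. Hence the
rectangle relations say exactly that the two amalgamation maps agree on `s` and `t`, so that the
rectangle group and the amalgamated product have the same universal property.
-/

/-- The amalgamated free product `G₁ *_K G₂` of two homomorphisms out of `K`, i.e. the pushout of
the family `twoFamHom φ₁ φ₂`; the index `true` is the left factor. -/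
abbrev AmalgProd {K G₁ G₂ : Type} [Group K] [Group G₁] [Group G₂]
    (φ₁ : K →* G₁) (φ₂ : K →* G₂) : Type :=
  Monoid.PushoutI (twoFamHom φ₁ φ₂)

namespace AmalgProd

variable {K G₁ G₂ : Type} [Group K] [Group G₁] [Group G₂] {M : Type*} [Monoid M]

section Inclusions

variable (φ₁ : K →* G₁) (φ₂ : K →* G₂)

/-- The canonical map from the left factor to the amalgamated product. -/
def inl : G₁ →* AmalgProd φ₁ φ₂ :=
  Monoid.PushoutI.of (φ := twoFamHom φ₁ φ₂) true

/-- The canonical map from the right factor to the amalgamated product. -/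
def inr : G₂ →* AmalgProd φ₁ φ₂ :=
  Monoid.PushoutI.of (φ := twoFamHom φ₁ φ₂) false

theorem inl_comp_eq_inr_comp : (inl φ₁ φ₂).comp φ₁ = (inr φ₁ φ₂).comp φ₂ :=
  (Monoid.PushoutI.of_comp_eq_base (φ := twoFamHom φ₁ φ₂) true).trans
    (Monoid.PushoutI.of_comp_eq_base (φ := twoFamHom φ₁ φ₂) false).symm

end Inclusions

variable {φ₁ : K →* G₁} {φ₂ : K →* G₂}

/-- The homomorphism out of the amalgamated product induced by homomorphisms `f₁`, `f₂` out of its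
factors that agree on `K`. -/
def lift (f₁ : G₁ →* M) (f₂ : G₂ →* M) (h : f₁.comp φ₁ = f₂.comp φ₂) : AmalgProd φ₁ φ₂ →* M :=
  Monoid.PushoutI.lift (fun | true => f₁ | false => f₂) (f₁.comp φ₁)
    (Bool.forall_bool.2 ⟨h.symm, rfl⟩)

@[simp]
theorem lift_inl (f₁ : G₁ →* M) (f₂ : G₂ →* M) (h : f₁.comp φ₁ = f₂.comp φ₂) (x : G₁) :
    lift f₁ f₂ h (inl φ₁ φ₂ x) = f₁ x :=
  Monoid.PushoutI.lift_of (φ := twoFamHom φ₁ φ₂) (i := true) _ _ _ x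

@[simp]
theorem lift_inr (f₁ : G₁ →* M) (f₂ : G₂ →* M) (h : f₁.comp φ₁ = f₂.comp φ₂) (x : G₂) :
    lift f₁ f₂ h (inr φ₁ φ₂ x) = f₂ x :=
  Monoid.PushoutI.lift_of (φ := twoFamHom φ₁ φ₂) (i := false) _ _ _ x

theorem hom_ext {f g : AmalgProd φ₁ φ₂ →* M}
    (hl : f.comp (inl φ₁ φ₂) = g.comp (inl φ₁ φ₂))
    (hr : f.comp (inr φ₁ φ₂) = g.comp (inr φ₁ φ₂)) : f = g :=
  Monoid.PushoutI.hom_ext_nonempty (Bool.forall_bool.2 ⟨hr, hl⟩)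

end AmalgProd

/-- The group `⟨x, y | x ^ m = y ^ n = 1⟩`, the free product of cyclic groups of orders `m` and `n`
(infinite cyclic for exponent `0`). -/
abbrev TwoCyclicGroup (m n : ℕ) : Type := PresentedGroup (twoCyclicRels m n)

namespace TwoCyclicGroup

variable {m n : ℕ} {G : Type*} [Group G]

theorem of_zero_pow : (PresentedGroup.of 0 : TwoCyclicGroup m n) ^ m = 1 :=
  PresentedGroup.one_of_mem (rels := twoCyclicRels m n) (by simp [twoCyclicRels])

theorem of_one_pow : (PresentedGroup.of 1 : TwoCyclicGroup m n) ^ n = 1 :=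
  PresentedGroup.one_of_mem (rels := twoCyclicRels m n) (by simp [twoCyclicRels])

/-- The homomorphism from `⟨x, y | x ^ m = y ^ n = 1⟩` to a group `G` that sends the generators to
two given elements of `G` satisfying the relations. -/
def lift (x y : G) (hx : x ^ m = 1) (hy : y ^ n = 1) : TwoCyclicGroup m n →* G :=
  PresentedGroup.toGroup (f := ![x, y]) (by simp [twoCyclicRels, hx, hy])

@[simp]
theorem lift_of_zero (x y : G) (hx : x ^ m = 1) (hy : y ^ n = 1) :
    lift x y hx hy (PresentedGroup.of 0) = x :=
  PresentedGroup.toGroup.of _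

@[simp]
theorem lift_of_one (x y : G) (hx : x ^ m = 1) (hy : y ^ n = 1) :
    lift x y hx hy (PresentedGroup.of 1) = y :=
  PresentedGroup.toGroup.of _

theorem hom_ext {f g : TwoCyclicGroup m n →* G}
    (h₀ : f (PresentedGroup.of 0) = g (PresentedGroup.of 0))
    (h₁ : f (PresentedGroup.of 1) = g (PresentedGroup.of 1)) : f = g :=
  PresentedGroup.ext (Fin.forall_fin_two.2 ⟨h₀, h₁⟩)

end TwoCyclicGroup

section IsRectangle

variable {G : Type*} [Group G]

/-- The two relations `b a⁻¹ = d c⁻¹` and `c a⁻¹ = d b⁻¹` of the rectangle group, imposed on four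
elements of an arbitrary group. -/
def IsRectangle (a b c d : G) : Prop :=
  b * a⁻¹ = d * c⁻¹ ∧ c * a⁻¹ = d * b⁻¹

theorem isRectangle_iff_mul_inv_eq_and_inv_mul_eq {a b c d : G} :
    IsRectangle a b c d ↔ a * b⁻¹ = c * d⁻¹ ∧ b⁻¹ * a = d⁻¹ * c := by
  refine and_congr ?_ ?_
  · simpa only [div_eq_mul_inv] using div_eq_div_iff_comm b a d
  · rw [mul_inv_eq_iff_eq_mul, mul_assoc, ← inv_mul_eq_iff_eq_mul, eq_comm]

theorem comp_amalgMap_eq_comp_amalgMap_iff {k l m n : ℕ}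
    {f : TwoCyclicGroup k l →* G} {g : TwoCyclicGroup m n →* G} :
    f.comp (amalgMap k l) = g.comp (amalgMap m n) ↔
      IsRectangle (f (PresentedGroup.of 0)) (f (PresentedGroup.of 1))
        (g (PresentedGroup.of 0)) (g (PresentedGroup.of 1)) := by
  rw [isRectangle_iff_mul_inv_eq_and_inv_mul_eq, FreeGroup.ext_hom_iff, Fin.forall_fin_two]
  simp [amalgMap]

end IsRectangle

namespace RectGroup

section Relations

variable (na nb nc nd : ℕ)

theorem Ra_pow : Ra na nb nc nd ^ na = 1 :=
  PresentedGroup.one_of_mem (rels := rectRels na nb nc nd) (by simp [rectRels])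

theorem Rb_pow : Rb na nb nc nd ^ nb = 1 :=
  PresentedGroup.one_of_mem (rels := rectRels na nb nc nd) (by simp [rectRels])

theorem Rc_pow : Rc na nb nc nd ^ nc = 1 :=
  PresentedGroup.one_of_mem (rels := rectRels na nb nc nd) (by simp [rectRels])

theorem Rd_pow : Rd na nb nc nd ^ nd = 1 :=
  PresentedGroup.one_of_mem (rels := rectRels na nb nc nd) (by simp [rectRels])

theorem isRectangle_generators :
    IsRectangle (Ra na nb nc nd) (Rb na nb nc nd) (Rc na nb nc nd) (Rd na nb nc nd) :=
  ⟨PresentedGroup.mk_eq_mk_of_mul_inv_mem (rels := rectRels na nb nc nd) (by simp [rectRels]),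
    PresentedGroup.mk_eq_mk_of_mul_inv_mem (rels := rectRels na nb nc nd) (by simp [rectRels])⟩

end Relations

variable {na nb nc nd : ℕ} {G : Type*} [Group G]

section Lift

variable {a b c d : G} (ha : a ^ na = 1) (hb : b ^ nb = 1) (hc : c ^ nc = 1) (hd : d ^ nd = 1)
  (h : IsRectangle a b c d)

/-- The homomorphism from the rectangle group to `G` that sends the generators to four given
elements of `G` satisfying the relations. -/
def lift : RectGroup na nb nc nd →* G :=
  PresentedGroup.toGroup (f := ![a, b, c, d])
    (by simp [rectRels, ha, hb, hc, hd, h.1, h.2])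

@[simp]
theorem lift_Ra : lift ha hb hc hd h (Ra na nb nc nd) = a :=
  PresentedGroup.toGroup.of _

@[simp]
theorem lift_Rb : lift ha hb hc hd h (Rb na nb nc nd) = b :=
  PresentedGroup.toGroup.of _

@[simp]
theorem lift_Rc : lift ha hb hc hd h (Rc na nb nc nd) = c :=
  PresentedGroup.toGroup.of _

@[simp]
theorem lift_Rd : lift ha hb hc hd h (Rd na nb nc nd) = d :=
  PresentedGroup.toGroup.of _

end Lift

theorem hom_ext {f g : RectGroup na nb nc nd →* G}
    (ha : f (Ra na nb nc nd) = g (Ra na nb nc nd)) (hb : f (Rb na nb nc nd) = g (Rb na nb nc nd))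
    (hc : f (Rc na nb nc nd) = g (Rc na nb nc nd)) (hd : f (Rd na nb nc nd) = g (Rd na nb nc nd)) :
    f = g :=
  PresentedGroup.ext (by simpa [Fin.forall_fin_succ] using ⟨ha, hb, hc, hd⟩)

variable (na nb nc nd)

/-- The homomorphism from the amalgamated product to the rectangle group that sends the generators
`a, b` of the left factor and `c, d` of the right factor to the generators of the same name. -/
def ofAmalgProd : AmalgProd (amalgMap na nb) (amalgMap nc nd) →* RectGroup na nb nc nd :=
  AmalgProd.lift
    (TwoCyclicGroup.lift _ _ (Ra_pow na nb nc nd) (Rb_pow na nb nc nd))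
    (TwoCyclicGroup.lift _ _ (Rc_pow na nb nc nd) (Rd_pow na nb nc nd))
    (comp_amalgMap_eq_comp_amalgMap_iff.2 (by simpa using isRectangle_generators na nb nc nd))

/-- The homomorphism from the rectangle group to the amalgamated product that sends each generator
to the generator of the same name in one of the factors. -/
def toAmalgProd : RectGroup na nb nc nd →* AmalgProd (amalgMap na nb) (amalgMap nc nd) :=
  lift (a := AmalgProd.inl _ _ (PresentedGroup.of 0)) (b := AmalgProd.inl _ _ (PresentedGroup.of 1))
    (c := AmalgProd.inr _ _ (PresentedGroup.of 0)) (d := AmalgProd.inr _ _ (PresentedGroup.of 1))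
    (by rw [← map_pow, TwoCyclicGroup.of_zero_pow, map_one])
    (by rw [← map_pow, TwoCyclicGroup.of_one_pow, map_one])
    (by rw [← map_pow, TwoCyclicGroup.of_zero_pow, map_one])
    (by rw [← map_pow, TwoCyclicGroup.of_one_pow, map_one])
    (comp_amalgMap_eq_comp_amalgMap_iff.1 (AmalgProd.inl_comp_eq_inr_comp _ _))

theorem toAmalgProd_comp_ofAmalgProd :
    (toAmalgProd na nb nc nd).comp (ofAmalgProd na nb nc nd) = MonoidHom.id _ := by
  apply AmalgProd.hom_ext <;> apply TwoCyclicGroup.hom_ext <;> simp [toAmalgProd, ofAmalgProd]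

theorem ofAmalgProd_comp_toAmalgProd :
    (ofAmalgProd na nb nc nd).comp (toAmalgProd na nb nc nd) = MonoidHom.id _ := by
  apply hom_ext <;> simp [toAmalgProd, ofAmalgProd]

/-- The isomorphism between the amalgamated product and the rectangle group that matches the
generators `a, b, c, d`. -/
def amalgProdEquiv :
    AmalgProd (amalgMap na nb) (amalgMap nc nd) ≃* RectGroup na nb nc nd :=
  MonoidHom.toMulEquiv (ofAmalgProd na nb nc nd) (toAmalgProd na nb nc nd)
    (toAmalgProd_comp_ofAmalgProd na nb nc nd) (ofAmalgProd_comp_toAmalgProd na nb nc nd)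

theorem amalgProdEquiv_inl_of_zero :
    amalgProdEquiv na nb nc nd (AmalgProd.inl _ _ (PresentedGroup.of 0)) = Ra na nb nc nd := by
  simp [amalgProdEquiv, ofAmalgProd]

theorem amalgProdEquiv_inl_of_one :
    amalgProdEquiv na nb nc nd (AmalgProd.inl _ _ (PresentedGroup.of 1)) = Rb na nb nc nd := by
  simp [amalgProdEquiv, ofAmalgProd]

theorem amalgProdEquiv_inr_of_zero :
    amalgProdEquiv na nb nc nd (AmalgProd.inr _ _ (PresentedGroup.of 0)) = Rc na nb nc nd := by
  simp [amalgProdEquiv, ofAmalgProd]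

theorem amalgProdEquiv_inr_of_one :
    amalgProdEquiv na nb nc nd (AmalgProd.inr _ _ (PresentedGroup.of 1)) = Rd na nb nc nd := by
  simp [amalgProdEquiv, ofAmalgProd]

end RectGroup

/-- `R` is the amalgamated free product `G₁ *_C G₂` with
`G₁ = ⟨a, b | a^{n_a} = b^{n_b} = 1⟩`, `G₂ = ⟨c, d | c^{n_c} = d^{n_d} = 1⟩`,
`C` free on `s, t`, amalgamated via `s ↦ a b⁻¹, t ↦ b⁻¹ a` and `s ↦ c d⁻¹, t ↦ d⁻¹ c`;
the isomorphism carries the images of `a, b, c, d` in the pushout to the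
generators `a, b, c, d` of `R`. -/
theorem rect_amalgam_ab_cd (na nb nc nd : ℕ)
    (hna : 2 ≤ na) (hnb : 2 ≤ nb) (hnc : 2 ≤ nc) (hnd : 2 ≤ nd) :
    ∃ e : Monoid.PushoutI (twoFamHom (amalgMap na nb) (amalgMap nc nd)) ≃*
        RectGroup na nb nc nd,
      e (Monoid.PushoutI.of (φ := twoFamHom (amalgMap na nb) (amalgMap nc nd)) true
          (PresentedGroup.of 0)) = Ra na nb nc nd ∧
      e (Monoid.PushoutI.of (φ := twoFamHom (amalgMap na nb) (amalgMap nc nd)) true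
          (PresentedGroup.of 1)) = Rb na nb nc nd ∧
      e (Monoid.PushoutI.of (φ := twoFamHom (amalgMap na nb) (amalgMap nc nd)) false
          (PresentedGroup.of 0)) = Rc na nb nc nd ∧
      e (Monoid.PushoutI.of (φ := twoFamHom (amalgMap na nb) (amalgMap nc nd)) false
          (PresentedGroup.of 1)) = Rd na nb nc nd :=
  ⟨RectGroup.amalgProdEquiv na nb nc nd,
    RectGroup.amalgProdEquiv_inl_of_zero na nb nc nd,
    RectGroup.amalgProdEquiv_inl_of_one na nb nc nd,
    RectGroup.amalgProdEquiv_inr_of_zero na nb nc nd,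
    RectGroup.amalgProdEquiv_inr_of_one na nb nc nd⟩
end

section
/- Let O be the presented group on generators x₁, x₂, x₃, x₄ with relations x₁^{n_a} = x₂^{n_b} = x₃^{n_d} = x₄^{n_c} = 1 and x₁ x₂ x₃ x₄ = 1 (the fundamental group of the 2-sphere orbifold with four cone points of orders n_a, n_b, n_d, n_c). Then the assignment x₁ ↦ a, x₂ ↦ b⁻¹, x₃ ↦ d, x₄ ↦ c⁻¹ extends to a surjective group homomorphism from O onto the rectangle group R. -/
/-- The relations of the fundamental group of the 2-sphere orbifold with four cone
points of orders `n_a, n_b, n_d, n_c`: generators `x₁, x₂, x₃, x₄` with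
`x₁^{n_a} = x₂^{n_b} = x₃^{n_d} = x₄^{n_c} = 1` and `x₁ x₂ x₃ x₄ = 1`. -/
def orbifoldRels (na nb nc nd : ℕ) : Set (FreeGroup (Fin 4)) :=
  {FreeGroup.of 0 ^ na, FreeGroup.of 1 ^ nb, FreeGroup.of 2 ^ nd, FreeGroup.of 3 ^ nc,
    FreeGroup.of 0 * FreeGroup.of 1 * FreeGroup.of 2 * FreeGroup.of 3}

theorem mul_inv_mul_mul_inv_eq_one_iff {G : Type*} [Group G] {a b c d : G} :
    a * b⁻¹ * d * c⁻¹ = 1 ↔ b * a⁻¹ = d * c⁻¹ := by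
  rw [mul_assoc, mul_eq_one_iff_inv_eq, mul_inv_rev, inv_inv]

theorem surjective_of_forall_of_mem_range {α G : Type*} [Group G] {rels : Set (FreeGroup α)}
    {φ : G →* PresentedGroup rels} (h : ∀ i, PresentedGroup.of i ∈ φ.range) :
    Function.Surjective φ :=
  PresentedGroup.generated_by rels φ.range h

theorem forall_orbifoldRels_lift_eq_one_iff {G : Type*} [Group G] {na nb nc nd : ℕ}
    {x : Fin 4 → G} :
    (∀ r ∈ orbifoldRels na nb nc nd, FreeGroup.lift x r = 1) ↔
      x 0 ^ na = 1 ∧ x 1 ^ nb = 1 ∧ x 2 ^ nd = 1 ∧ x 3 ^ nc = 1 ∧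
        x 0 * x 1 * x 2 * x 3 = 1 := by
  simp [orbifoldRels]

section RectGroup

variable (na nb nc nd : ℕ)

theorem Ra_pow_eq_one : Ra na nb nc nd ^ na = 1 :=
  PresentedGroup.one_of_mem (x := FreeGroup.of 0 ^ na) (by simp [rectRels])

theorem Rb_pow_eq_one : Rb na nb nc nd ^ nb = 1 :=
  PresentedGroup.one_of_mem (x := FreeGroup.of 1 ^ nb) (by simp [rectRels])

theorem Rc_pow_eq_one : Rc na nb nc nd ^ nc = 1 :=
  PresentedGroup.one_of_mem (x := FreeGroup.of 2 ^ nc) (by simp [rectRels])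

theorem Rd_pow_eq_one : Rd na nb nc nd ^ nd = 1 :=
  PresentedGroup.one_of_mem (x := FreeGroup.of 3 ^ nd) (by simp [rectRels])

theorem Rb_mul_inv_Ra_eq_Rd_mul_inv_Rc :
    Rb na nb nc nd * (Ra na nb nc nd)⁻¹ = Rd na nb nc nd * (Rc na nb nc nd)⁻¹ :=
  PresentedGroup.mk_eq_mk_of_mul_inv_mem (x := FreeGroup.of 1 * (FreeGroup.of 0)⁻¹)
    (y := FreeGroup.of 3 * (FreeGroup.of 2)⁻¹) (by simp [rectRels])

/-- The images `a, b⁻¹, d, c⁻¹` in the rectangle group of the orbifold generators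
`x₁, x₂, x₃, x₄`, which are indexed from `0`. -/
def orbifoldGenImage : Fin 4 → RectGroup na nb nc nd :=
  ![Ra na nb nc nd, (Rb na nb nc nd)⁻¹, Rd na nb nc nd, (Rc na nb nc nd)⁻¹]

theorem lift_orbifoldGenImage_eq_one :
    ∀ r ∈ orbifoldRels na nb nc nd, FreeGroup.lift (orbifoldGenImage na nb nc nd) r = 1 :=
  forall_orbifoldRels_lift_eq_one_iff.2
    ⟨Ra_pow_eq_one na nb nc nd, by simp [orbifoldGenImage, Rb_pow_eq_one],
      Rd_pow_eq_one na nb nc nd, by simp [orbifoldGenImage, Rc_pow_eq_one],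
      mul_inv_mul_mul_inv_eq_one_iff.2 (Rb_mul_inv_Ra_eq_Rd_mul_inv_Rc na nb nc nd)⟩

/-- The homomorphism from the orbifold group to the rectangle group extending
`x₁ ↦ a`, `x₂ ↦ b⁻¹`, `x₃ ↦ d`, `x₄ ↦ c⁻¹`. -/
def orbifoldToRect : PresentedGroup (orbifoldRels na nb nc nd) →* RectGroup na nb nc nd :=
  PresentedGroup.toGroup (lift_orbifoldGenImage_eq_one na nb nc nd)

theorem orbifoldToRect_of (i : Fin 4) :
    orbifoldToRect na nb nc nd (PresentedGroup.of i) = orbifoldGenImage na nb nc nd i :=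
  PresentedGroup.toGroup.of _

theorem orbifoldToRect_surjective : Function.Surjective (orbifoldToRect na nb nc nd) := by
  have genImage_mem (i : Fin 4) :
      orbifoldGenImage na nb nc nd i ∈ (orbifoldToRect na nb nc nd).range :=
    ⟨PresentedGroup.of i, orbifoldToRect_of na nb nc nd i⟩
  refine surjective_of_forall_of_mem_range fun i ↦ ?_
  fin_cases i
  · exact genImage_mem 0
  · exact inv_mem_iff.1 (genImage_mem 1)
  · exact inv_mem_iff.1 (genImage_mem 3)
  · exact genImage_mem 2

end RectGroup

/-- The assignment `x₁ ↦ a`, `x₂ ↦ b⁻¹`, `x₃ ↦ d`, `x₄ ↦ c⁻¹` extends to a surjective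
homomorphism from the orbifold group `O` onto the rectangle group `R`. -/
theorem orbifold_surjects_onto_rect (na nb nc nd : ℕ)
    (hna : 2 ≤ na) (hnb : 2 ≤ nb) (hnc : 2 ≤ nc) (hnd : 2 ≤ nd) :
    ∃ φ : PresentedGroup (orbifoldRels na nb nc nd) →* RectGroup na nb nc nd,
      φ (PresentedGroup.of 0) = Ra na nb nc nd ∧
      φ (PresentedGroup.of 1) = (Rb na nb nc nd)⁻¹ ∧
      φ (PresentedGroup.of 2) = Rd na nb nc nd ∧
      φ (PresentedGroup.of 3) = (Rc na nb nc nd)⁻¹ ∧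
      Function.Surjective φ :=
  ⟨orbifoldToRect na nb nc nd, orbifoldToRect_of na nb nc nd 0, orbifoldToRect_of na nb nc nd 1,
    orbifoldToRect_of na nb nc nd 2, orbifoldToRect_of na nb nc nd 3,
    orbifoldToRect_surjective na nb nc nd⟩
end

section
/- In the cube group S, the elements x = a b⁻¹, y = a c⁻¹ and z = a e⁻¹ pairwise commute. -/
/-- The word `u v⁻¹` in the free group on eight generators. -/
def cw (i j : Fin 8) : FreeGroup (Fin 8) := FreeGroup.of i * (FreeGroup.of j)⁻¹

/-- The defining relations of the cube group `S` on generators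
`a, b, c, d, e, f, g, h` (indexed `0, …, 7`):
`a b⁻¹ = c d⁻¹ = e f⁻¹ = g h⁻¹`, `a c⁻¹ = b d⁻¹ = e g⁻¹ = f h⁻¹`,
`a e⁻¹ = b f⁻¹ = c g⁻¹ = d h⁻¹`. -/
def cubeRels : Set (FreeGroup (Fin 8)) :=
  {cw 0 1 * (cw 2 3)⁻¹, cw 2 3 * (cw 4 5)⁻¹, cw 4 5 * (cw 6 7)⁻¹,
    cw 0 2 * (cw 1 3)⁻¹, cw 1 3 * (cw 4 6)⁻¹, cw 4 6 * (cw 5 7)⁻¹,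
    cw 0 4 * (cw 1 5)⁻¹, cw 1 5 * (cw 2 6)⁻¹, cw 2 6 * (cw 3 7)⁻¹}

/-- The cube group `S`. -/
abbrev CubeGroup : Type := PresentedGroup cubeRels

/-- The generator `a` of the cube group. -/
def Sa : CubeGroup := PresentedGroup.of 0
/-- The generator `b` of the cube group. -/
def Sb : CubeGroup := PresentedGroup.of 1
/-- The generator `c` of the cube group. -/
def Sc : CubeGroup := PresentedGroup.of 2
/-- The generator `e` of the cube group. -/
def Se : CubeGroup := PresentedGroup.of 4

/-! View the generators as the vertices of a cube, so that the relations identify the quotients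
along parallel edges. Two edges at `a` span a face; the product of their quotients, in either order,
is the quotient along a path around that face from `a` to the opposite vertex. Both paths telescope
to the same diagonal quotient, so the two edge quotients commute. -/

theorem commute_mul_inv_of_mul_inv_eq {G : Type*} [Group G] {a b c d : G}
    (hab : a * b⁻¹ = c * d⁻¹) (hac : a * c⁻¹ = b * d⁻¹) :
    Commute (a * b⁻¹) (a * c⁻¹) :=
  calc
    a * b⁻¹ * (a * c⁻¹) = a * b⁻¹ * (b * d⁻¹) := by rw [hac]
    _ = a * d⁻¹ := mul_inv_mul_mul_cancel a b d⁻¹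
    _ = a * c⁻¹ * (c * d⁻¹) := (mul_inv_mul_mul_cancel a c d⁻¹).symm
    _ = a * c⁻¹ * (a * b⁻¹) := by rw [hab]

theorem mul_inv_eq_of_mem_cubeRels {i j k l : Fin 8} (h : cw i j * (cw k l)⁻¹ ∈ cubeRels) :
    (PresentedGroup.of i * (PresentedGroup.of j)⁻¹ : CubeGroup) =
      PresentedGroup.of k * (PresentedGroup.of l)⁻¹ :=
  PresentedGroup.mk_eq_mk_of_mul_inv_mem h

/-- In the cube group `S`, the elements `x = a b⁻¹`, `y = a c⁻¹`, `z = a e⁻¹`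
pairwise commute. -/
theorem cube_xyz_pairwise_commute :
    Commute (Sa * Sb⁻¹) (Sa * Sc⁻¹) ∧
    Commute (Sa * Sb⁻¹) (Sa * Se⁻¹) ∧
    Commute (Sa * Sc⁻¹) (Sa * Se⁻¹) := by
  let d : CubeGroup := PresentedGroup.of 3
  let f : CubeGroup := PresentedGroup.of 5
  let g : CubeGroup := PresentedGroup.of 6
  have ab_eq_cd : Sa * Sb⁻¹ = Sc * d⁻¹ := mul_inv_eq_of_mem_cubeRels (by simp [cubeRels])
  have cd_eq_ef : Sc * d⁻¹ = Se * f⁻¹ := mul_inv_eq_of_mem_cubeRels (by simp [cubeRels])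
  have ac_eq_bd : Sa * Sc⁻¹ = Sb * d⁻¹ := mul_inv_eq_of_mem_cubeRels (by simp [cubeRels])
  have bd_eq_eg : Sb * d⁻¹ = Se * g⁻¹ := mul_inv_eq_of_mem_cubeRels (by simp [cubeRels])
  have ae_eq_bf : Sa * Se⁻¹ = Sb * f⁻¹ := mul_inv_eq_of_mem_cubeRels (by simp [cubeRels])
  have bf_eq_cg : Sb * f⁻¹ = Sc * g⁻¹ := mul_inv_eq_of_mem_cubeRels (by simp [cubeRels])
  exact ⟨commute_mul_inv_of_mul_inv_eq ab_eq_cd ac_eq_bd,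
    commute_mul_inv_of_mul_inv_eq (ab_eq_cd.trans cd_eq_ef) ae_eq_bf,
    commute_mul_inv_of_mul_inv_eq (ac_eq_bd.trans bd_eq_eg) (ae_eq_bf.trans bf_eq_cg)⟩
end

section
/- In the cube group S, the elements x' = b⁻¹ a, y' = c⁻¹ a and z' = e⁻¹ a pairwise commute. -/
/-! In the face `a, b, c, d` of the cube, `x' y' = b⁻¹ (a c⁻¹) a = b⁻¹ (b d⁻¹) a = d⁻¹ a`, and this
value does not change when `b` and `c` are exchanged. Each of the three pairs spans one of the three
faces at `a`. -/

/-- The generator `d` of the cube group. -/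
def Sd : CubeGroup := PresentedGroup.of 3
/-- The generator `f` of the cube group. -/
def Sf : CubeGroup := PresentedGroup.of 5
/-- The generator `g` of the cube group. -/
def Sg : CubeGroup := PresentedGroup.of 6

section Group

variable {G : Type*} [Group G] {a b c d : G}

theorem inv_mul_mul_inv_mul_eq_of_mul_inv_eq (h : a * c⁻¹ = b * d⁻¹) :
    b⁻¹ * a * (c⁻¹ * a) = d⁻¹ * a :=
  calc
    b⁻¹ * a * (c⁻¹ * a) = b⁻¹ * (a * c⁻¹) * a := by simp only [mul_assoc]
    _ = b⁻¹ * (b * d⁻¹) * a := by rw [h]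
    _ = d⁻¹ * a := by rw [inv_mul_cancel_left]

theorem commute_inv_mul_of_mul_inv_eq (hab : a * b⁻¹ = c * d⁻¹) (hac : a * c⁻¹ = b * d⁻¹) :
    Commute (b⁻¹ * a) (c⁻¹ * a) :=
  (inv_mul_mul_inv_mul_eq_of_mul_inv_eq hac).trans
    (inv_mul_mul_inv_mul_eq_of_mul_inv_eq hab).symm

end Group

theorem of_mul_inv_of_eq_of_cw_mem {rels : Set (FreeGroup (Fin 8))} {i j k l : Fin 8}
    (h : cw i j * (cw k l)⁻¹ ∈ rels) :
    (PresentedGroup.of i * (PresentedGroup.of j)⁻¹ : PresentedGroup rels) =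
      PresentedGroup.of k * (PresentedGroup.of l)⁻¹ :=
  PresentedGroup.mk_eq_mk_of_mul_inv_mem h

/-- In the cube group `S`, the elements `x' = b⁻¹ a`, `y' = c⁻¹ a`, `z' = e⁻¹ a`
pairwise commute. -/
theorem cube_xyz'_pairwise_commute :
    Commute (Sb⁻¹ * Sa) (Sc⁻¹ * Sa) ∧
    Commute (Sb⁻¹ * Sa) (Se⁻¹ * Sa) ∧
    Commute (Sc⁻¹ * Sa) (Se⁻¹ * Sa) := by
  have ab_cd : Sa * Sb⁻¹ = Sc * Sd⁻¹ := of_mul_inv_of_eq_of_cw_mem (by simp [cubeRels])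
  have cd_ef : Sc * Sd⁻¹ = Se * Sf⁻¹ := of_mul_inv_of_eq_of_cw_mem (by simp [cubeRels])
  have ac_bd : Sa * Sc⁻¹ = Sb * Sd⁻¹ := of_mul_inv_of_eq_of_cw_mem (by simp [cubeRels])
  have bd_eg : Sb * Sd⁻¹ = Se * Sg⁻¹ := of_mul_inv_of_eq_of_cw_mem (by simp [cubeRels])
  have ae_bf : Sa * Se⁻¹ = Sb * Sf⁻¹ := of_mul_inv_of_eq_of_cw_mem (by simp [cubeRels])
  have bf_cg : Sb * Sf⁻¹ = Sc * Sg⁻¹ := of_mul_inv_of_eq_of_cw_mem (by simp [cubeRels])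
  exact ⟨commute_inv_mul_of_mul_inv_eq ab_cd ac_bd,
    commute_inv_mul_of_mul_inv_eq (ab_cd.trans cd_ef) ae_bf,
    commute_inv_mul_of_mul_inv_eq (ac_bd.trans bd_eg) (ae_bf.trans bf_cg)⟩
end

section
/- The group homomorphism from ℤ × ℤ × ℤ to the cube group S defined by (l, m, n) ↦ (a b⁻¹)^l (a c⁻¹)^m (a e⁻¹)^n is injective; that is, x = a b⁻¹, y = a c⁻¹ and z = a e⁻¹ generate a free abelian subgroup of S of rank 3. -/
/-!
Place the eight generators at the vertices of the unit cube in `ℤ³`. Every defining relation equates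
the words `u v⁻¹` and `w t⁻¹` of two parallel edges, whose endpoints differ by the same vector, so
sending each generator to its vertex extends to a homomorphism `S → ℤ³`. It sends `x`, `y`, `z` to
the standard basis, and therefore recovers `(l, m, n)` from `x ^ l * y ^ m * z ^ n`.
-/

/-- The vertex of the unit cube in `ℤ³` at which a generator of the cube group is placed. The
generator `h` sits at the origin and `a` at the opposite vertex, so that `a b⁻¹`, `a c⁻¹`, `a e⁻¹`
become the positive basis vectors. -/
def cubeVertex : Fin 8 → ℤ × ℤ × ℤ :=
  ![(1, 1, 1), (0, 1, 1), (1, 0, 1), (0, 0, 1), (1, 1, 0), (0, 1, 0), (1, 0, 0), (0, 0, 0)]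

theorem lift_cw {G : Type*} [Group G] (f : Fin 8 → G) (i j : Fin 8) :
    FreeGroup.lift f (cw i j) = f i * (f j)⁻¹ := by
  simp only [cw, map_mul, map_inv, FreeGroup.lift_apply_of]

theorem lift_ofAdd_cubeVertex_eq_one :
    ∀ r ∈ cubeRels, FreeGroup.lift (fun i => Multiplicative.ofAdd (cubeVertex i)) r = 1 := by
  simp only [cubeRels, Set.forall_mem_insert, Set.mem_singleton_iff, forall_eq, map_mul, map_inv,
    lift_cw]
  decide

/-- The homomorphism from the cube group to `ℤ³` sending each generator to its vertex of the unit
cube. It detects the powers of `a b⁻¹`, `a c⁻¹` and `a e⁻¹`. -/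
def cubeVertexHom : CubeGroup →* Multiplicative (ℤ × ℤ × ℤ) :=
  PresentedGroup.toGroup lift_ofAdd_cubeVertex_eq_one

theorem cubeVertexHom_of_mul_inv_of (i j : Fin 8) :
    cubeVertexHom (PresentedGroup.of i * (PresentedGroup.of j)⁻¹) =
      Multiplicative.ofAdd (cubeVertex i - cubeVertex j) := by
  simp only [cubeVertexHom, map_mul, map_inv, PresentedGroup.toGroup.of, sub_eq_add_neg, ofAdd_add,
    ofAdd_neg]

theorem leftInverse_toAdd_zpow_mul_zpow_mul_zpow {G : Type*} [Group G]
    (φ : G →* Multiplicative (ℤ × ℤ × ℤ)) {x y z : G}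
    (hx : φ x = Multiplicative.ofAdd (1, 0, 0)) (hy : φ y = Multiplicative.ofAdd (0, 1, 0))
    (hz : φ z = Multiplicative.ofAdd (0, 0, 1)) :
    Function.LeftInverse (fun g => (φ g).toAdd)
      (fun t : ℤ × ℤ × ℤ => x ^ t.1 * y ^ t.2.1 * z ^ t.2.2) := by
  rintro ⟨l, m, n⟩
  simp [hx, hy, hz]

/-- The homomorphism `ℤ × ℤ × ℤ → S`, `(l, m, n) ↦ (a b⁻¹)^l (a c⁻¹)^m (a e⁻¹)^n`,
is injective: `x = a b⁻¹`, `y = a c⁻¹`, `z = a e⁻¹` generate a free abelian subgroup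
of `S` of rank 3. -/
theorem cube_free_abelian_rank_three :
    Function.Injective (fun t : ℤ × ℤ × ℤ =>
      (Sa * Sb⁻¹) ^ t.1 * (Sa * Sc⁻¹) ^ t.2.1 * (Sa * Se⁻¹) ^ t.2.2) := by
  have hx : cubeVertexHom (Sa * Sb⁻¹) = Multiplicative.ofAdd (1, 0, 0) :=
    cubeVertexHom_of_mul_inv_of 0 1
  have hy : cubeVertexHom (Sa * Sc⁻¹) = Multiplicative.ofAdd (0, 1, 0) :=
    cubeVertexHom_of_mul_inv_of 0 2
  have hz : cubeVertexHom (Sa * Se⁻¹) = Multiplicative.ofAdd (0, 0, 1) :=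
    cubeVertexHom_of_mul_inv_of 0 4
  exact (leftInverse_toAdd_zpow_mul_zpow_mul_zpow cubeVertexHom hx hy hz).injective
end

section
/- In the parallelepiped group P_n, the elements x_i = a_0 (a_{e_i})⁻¹, for i = 1, …, n, pairwise commute. -/
/-- The defining relations of the parallelepiped group `P_n`: generators `a_v` indexed
by the vertices `v ∈ {0,1}^n` of the `n`-cube, with, for every direction `i` and every
vertex `v` with `v_i = 0`, the relation `a_v (a_{v + e_i})⁻¹ = a_0 (a_{e_i})⁻¹`. -/
def parRels (n : ℕ) : Set (FreeGroup (Fin n → Bool)) :=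
  { r | ∃ (i : Fin n) (v : Fin n → Bool), v i = false ∧
      r = FreeGroup.of v * (FreeGroup.of (Function.update v i true))⁻¹ *
        (FreeGroup.of (fun _ => false) *
          (FreeGroup.of (fun j => decide (j = i)))⁻¹)⁻¹ }

/-- The parallelepiped group `P_n`. -/
abbrev ParGroup (n : ℕ) : Type := PresentedGroup (parRels n)

/-- The element `x_i = a_0 (a_{e_i})⁻¹` of the parallelepiped group `P_n`. -/
def Px (n : ℕ) (i : Fin n) : ParGroup n :=
  PresentedGroup.of (fun _ => false) *
    (PresentedGroup.of (fun j => decide (j = i)))⁻¹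

/-!
Walking along two adjacent edges of a square face of the cube, in directions `i` and `j`, the
product `x_i x_j` telescopes to `a_v (a_w)⁻¹`, where `v` and `w` are opposite corners of the face.
Going round the other way gives `x_j x_i` with the same two corners.
-/

section CubeLabelling

variable {ι G : Type*} [DecidableEq ι] [Group G] {a : (ι → Bool) → G} {x : ι → G}

theorem mul_eq_mul_inv_update_update
    (ha : ∀ i v, v i = false → a v * (a (Function.update v i true))⁻¹ = x i)
    {i j : ι} (hij : i ≠ j) {v : ι → Bool} (hi : v i = false) (hj : v j = false) :
    x i * x j = a v * (a (Function.update (Function.update v i true) j true))⁻¹ := by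
  have hj' : Function.update v i true j = false := by rwa [Function.update_of_ne hij.symm]
  rw [← ha i v hi, ← ha j _ hj', mul_assoc, inv_mul_cancel_left]

theorem par_x_pairwise_commute_general
    (ha : ∀ i v, v i = false → a v * (a (Function.update v i true))⁻¹ = x i) (i j : ι) :
    Commute (x i) (x j) := by
  obtain rfl | hij := eq_or_ne i j
  · exact Commute.refl _
  let v₀ : ι → Bool := fun _ => false
  calc x i * x j
      = a v₀ * (a (Function.update (Function.update v₀ i true) j true))⁻¹ :=
        mul_eq_mul_inv_update_update ha hij rfl rfl
    _ = a v₀ * (a (Function.update (Function.update v₀ j true) i true))⁻¹ := by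
        rw [Function.update_comm hij]
    _ = x j * x i := (mul_eq_mul_inv_update_update ha hij.symm rfl rfl).symm

end CubeLabelling

theorem of_mul_inv_of_update (n : ℕ) (i : Fin n) (v : Fin n → Bool) (hv : v i = false) :
    (PresentedGroup.of v : ParGroup n) * (PresentedGroup.of (Function.update v i true))⁻¹ =
      Px n i :=
  PresentedGroup.mk_eq_mk_of_mul_inv_mem ⟨i, v, hv, rfl⟩

/-- In the parallelepiped group `P_n`, the elements `x_i = a_0 (a_{e_i})⁻¹`
pairwise commute. -/
theorem par_x_pairwise_commute (n : ℕ) (hn : 1 ≤ n) (i j : Fin n) :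
    Commute (Px n i) (Px n j) :=
  par_x_pairwise_commute_general (of_mul_inv_of_update n) i j
end
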